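/- Let H be a finite-dimensional Hopf algebra over a field k of positive characteristic, with antipode S and Sweedler power maps P^{(n)}. Then the indicator sequence of H is periodic: there exists an integer T > 0 such that Tr(S ∘ P^{(n+T)}) = Tr(S ∘ P^{(n)}) for all n ∈ ℕ, i.e. ν_{n+T}(H) = ν_n(H) for all n ≥ 1. -/

import Mathlib

open scoped TensorProduct

/-- The Sweedler power maps `P^(n) : H →ₗ[k] H` of a bialgebra: convolution powers of the
identity, defined by `P^(0) = u ∘ ε` and `P^(n+1) = m ∘ (P^(n) ⊗ id) ∘ Δ`. -/
noncomputable def sweedlerPower (k H : Type*) [CommSemiring k] [Semiring H]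
    [Bialgebra k H] : ℕ → H →ₗ[k] H
  | 0 => (Algebra.linearMap k H) ∘ₗ (Coalgebra.counit : H →ₗ[k] k)
  | n + 1 => (LinearMap.mul' k H) ∘ₗ
      (TensorProduct.map (sweedlerPower k H n) LinearMap.id) ∘ₗ
      (Coalgebra.comul : H →ₗ[k] H ⊗[k] H)


open scoped TensorProduct

namespace IndPer

open Coalgebra HopfAlgebra WithConv LinearMap

section basics
variable {k H A B : Type*} [Field k] [Ring H] [HopfAlgebra k H]
  [Ring A] [Algebra k A] [Ring B] [Algebra k B]

lemma comp_mul_of {f g r : H →ₗ[k] A} (χ : A →ₐ[k] B) (h : toConv f * toConv g = toConv r) :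
    toConv (χ.toLinearMap ∘ₗ f) * toConv (χ.toLinearMap ∘ₗ g) = toConv (χ.toLinearMap ∘ₗ r) := by
  have := algHom_comp_convMul_distrib χ (toConv f) (toConv g)
  rw [h] at this
  apply WithConv.ext
  exact this.symm

lemma comp_one_of (χ : A →ₐ[k] B) :
    toConv (χ.toLinearMap ∘ₗ (1 : WithConv (H →ₗ[k] A)).ofConv) = (1 : WithConv (H →ₗ[k] B)) := by
  apply WithConv.ext
  ext x
  change χ (algebraMap k A (counit x)) = algebraMap k B (counit x)
  simp

lemma comp_mul_one (χ : A →ₐ[k] B) {f g : H →ₗ[k] A} (h : toConv f * toConv g = 1) :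
    toConv (χ.toLinearMap ∘ₗ f) * toConv (χ.toLinearMap ∘ₗ g) = 1 := by
  rw [← comp_one_of χ]
  exact comp_mul_of χ h

variable (k H) in
/-- antipode -/
noncomputable abbrev SS : H →ₗ[k] H := antipode k

lemma S_mul_I : toConv (SS k H) * toConv (LinearMap.id) = 1 := antipode_mul_id
lemma I_mul_S : toConv (LinearMap.id) * toConv (SS k H) = 1 := id_mul_antipode

lemma hom_S (χ : H →ₐ[k] B) : toConv (χ.toLinearMap ∘ₗ SS k H) * toConv χ.toLinearMap = 1 := by
  have := comp_mul_one χ (S_mul_I (k := k) (H := H))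
  rwa [LinearMap.comp_id] at this
lemma S_hom (χ : H →ₐ[k] B) : toConv χ.toLinearMap * toConv (χ.toLinearMap ∘ₗ SS k H) = 1 := by
  have := comp_mul_one χ (I_mul_S (k := k) (H := H))
  rwa [LinearMap.comp_id] at this

variable (k H) in
noncomputable abbrev inl : H →ₐ[k] H ⊗[k] H := Algebra.TensorProduct.includeLeft
variable (k H) in
noncomputable abbrev inr : H →ₐ[k] H ⊗[k] H := Algebra.TensorProduct.includeRight

lemma conv_apply {f g : H →ₗ[k] A} (x : H) : (toConv f * toConv g).ofConv x =
    ∑ i ∈ (ℛ k x).index, f ((ℛ k x).left i) * g ((ℛ k x).right i) := 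
  (ℛ k x).convMul_apply (toConv f) (toConv g)

lemma repr_eq (x : H) : comul (R := k) x = ∑ i ∈ (ℛ k x).index, (ℛ k x).left i ⊗ₜ (ℛ k x).right i := 
  (ℛ k x).eq.symm

lemma comul_eq_conv : toConv (comul : H →ₗ[k] H ⊗[k] H) =
    toConv (inl k H).toLinearMap * toConv (inr k H).toLinearMap := by
  apply WithConv.ext
  ext x
  rw [conv_apply]
  simp [← repr_eq]

lemma comul_S_conv : toConv (comul ∘ₗ SS k H : H →ₗ[k] H ⊗[k] H) =
    toConv ((inr k H).toLinearMap ∘ₗ SS k H) * toConv ((inl k H).toLinearMap ∘ₗ SS k H) := by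
  have h1 : toConv (comul : H →ₗ[k] H ⊗[k] H) * toConv (comul ∘ₗ SS k H) = 1 :=
    S_hom (Bialgebra.comulAlgHom k H)
  refine (left_inv_eq_right_inv ?_ h1).symm
  rw [comul_eq_conv, mul_assoc, ← mul_assoc (toConv ((inl k H).toLinearMap ∘ₗ SS k H)),
    hom_S, one_mul, hom_S]

lemma comul_S (x : H) : comul (R := k) (SS k H x) =
    ∑ i ∈ (ℛ k x).index, SS k H ((ℛ k x).right i) ⊗ₜ[k] SS k H ((ℛ k x).left i) := by
  have := congrArg (fun f => f.ofConv x) (comul_S_conv (k := k) (H := H))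
  simp only [conv_apply] at this
  simpa using this

lemma comul_S2_conv : toConv (comul ∘ₗ SS k H ∘ₗ SS k H : H →ₗ[k] H ⊗[k] H) =
    toConv ((inl k H).toLinearMap ∘ₗ SS k H ∘ₗ SS k H) *
      toConv ((inr k H).toLinearMap ∘ₗ SS k H ∘ₗ SS k H) := by
  apply WithConv.ext
  ext x
  rw [conv_apply]
  have h : TensorProduct.comm k H H (comul (R := k) (SS k H x)) =
    ∑ i ∈ (ℛ k x).index, SS k H ((ℛ k x).left i) ⊗ₜ[k] SS k H ((ℛ k x).right i) := by
    rw [comul_S]; simp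
  have h2 : comul (R := k) (SS k H (SS k H x)) = TensorProduct.map (SS k H) (SS k H)
     (TensorProduct.comm k H H (comul (R := k) (SS k H x))) := by
    rw [comul_S, repr_eq (SS k H x)]; simp
  simp [h2, h]

lemma comul_S2 (x : H) : comul (R := k) (SS k H (SS k H x)) =
    ∑ i ∈ (ℛ k x).index, SS k H (SS k H ((ℛ k x).left i)) ⊗ₜ[k]
      SS k H (SS k H ((ℛ k x).right i)) := by
  have := congrArg (fun f => f.ofConv x) (comul_S2_conv (k := k) (H := H))
  simp only [conv_apply] at this
  simpa using this

/-- scalar functional as a map to an algebra -/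
noncomputable def sc (A : Type*) [Ring A] [Algebra k A] (f : H →ₗ[k] k) : H →ₗ[k] A :=
  Algebra.linearMap k A ∘ₗ f

@[simp] lemma sc_apply (f : H →ₗ[k] k) (x : H) : sc A f x = algebraMap k A (f x) := rfl

/-- `x ↦ x₁ f(x₂)` -/
noncomputable def cR (f : H →ₗ[k] k) : H →ₗ[k] H :=
  (toConv LinearMap.id * toConv (sc H f)).ofConv

/-- `x ↦ f(x₁) x₂` -/
noncomputable def cL (f : H →ₗ[k] k) : H →ₗ[k] H :=
  (toConv (sc H f) * toConv LinearMap.id).ofConv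

lemma cR_apply (f : H →ₗ[k] k) (x : H) : cR f x =
    ∑ i ∈ (ℛ k x).index, f ((ℛ k x).right i) • (ℛ k x).left i := by
  rw [cR, conv_apply]
  simp [Algebra.smul_def, Algebra.commutes]

lemma cL_apply (f : H →ₗ[k] k) (x : H) : cL f x =
    ∑ i ∈ (ℛ k x).index, f ((ℛ k x).left i) • (ℛ k x).right i := by
  rw [cL, conv_apply]
  simp [Algebra.smul_def]

lemma comp_cR (F : H →ₗ[k] A) (f : H →ₗ[k] k) :
    toConv (F ∘ₗ cR f) = toConv F * toConv (sc A f) := by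
  apply WithConv.ext
  ext x
  rw [conv_apply]
  simp only [cR_apply, LinearMap.comp_apply, map_sum, map_smul]
  simp [Algebra.smul_def, Algebra.commutes]

lemma comp_cL (F : H →ₗ[k] A) (f : H →ₗ[k] k) :
    toConv (F ∘ₗ cL f) = toConv (sc A f) * toConv F := by
  apply WithConv.ext
  ext x
  rw [conv_apply]
  simp only [cL_apply, LinearMap.comp_apply, map_sum, map_smul]
  simp [Algebra.smul_def]

lemma cR_cL (f g : H →ₗ[k] k) : cR f ∘ₗ cL g = cL g ∘ₗ cR f := by
  apply toConv_injective
  rw [comp_cR, comp_cL]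
  change _ * (toConv LinearMap.id * toConv (sc H f)) = (toConv (sc H g) * toConv LinearMap.id) * _
  rw [mul_assoc]

/-- comul through a functional on the right factor -/
lemma cR_eq_rid (f : H →ₗ[k] k) (x : H) :
    cR f x = TensorProduct.rid k H (TensorProduct.map LinearMap.id f (comul x)) := by
  rw [cR_apply, repr_eq x]; simp

lemma cL_eq_lid (f : H →ₗ[k] k) (x : H) :
    cL f x = TensorProduct.lid k H (TensorProduct.map f LinearMap.id (comul x)) := by
  rw [cL_apply, repr_eq x]; simp

lemma cR_counit (x : H) : cR (counit : H →ₗ[k] k) x = x := by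
  have : toConv (sc H (counit : H →ₗ[k] k)) = 1 := rfl
  rw [cR, this, mul_one]; rfl

lemma cL_counit (x : H) : cL (counit : H →ₗ[k] k) x = x := by
  have : toConv (sc H (counit : H →ₗ[k] k)) = 1 := rfl
  rw [cL, this, one_mul]; rfl

variable {ι : Type*} [Fintype ι] (b : Module.Basis ι k H)

lemma comul_eq_sumR (x : H) : comul (R := k) x = ∑ i, cR (b.coord i) x ⊗ₜ[k] b i := by
  have : ∀ j, (ℛ k x).left j ⊗ₜ[k] (ℛ k x).right j =
      ∑ i, (b.coord i ((ℛ k x).right j) • (ℛ k x).left j) ⊗ₜ[k] b i := fun j => by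
    conv_lhs => rw [← b.sum_repr ((ℛ k x).right j), TensorProduct.tmul_sum]
    simp [TensorProduct.smul_tmul]
  rw [repr_eq, Finset.sum_congr rfl fun j _ => this j, Finset.sum_comm]
  simp [cR_apply, TensorProduct.sum_tmul]

lemma comul_eq_sumL (x : H) : comul (R := k) x = ∑ i, b i ⊗ₜ[k] cL (b.coord i) x := by
  have : ∀ j, (ℛ k x).left j ⊗ₜ[k] (ℛ k x).right j =
      ∑ i, b i ⊗ₜ[k] (b.coord i ((ℛ k x).left j) • (ℛ k x).right j) := fun j => by
    conv_lhs => rw [← b.sum_repr ((ℛ k x).left j), TensorProduct.sum_tmul]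
    simp [TensorProduct.smul_tmul]
  rw [repr_eq, Finset.sum_congr rfl fun j _ => this j, Finset.sum_comm]
  simp [cL_apply, TensorProduct.tmul_sum]

lemma conv_sumR (f g : H →ₗ[k] A) (x : H) : (toConv f * toConv g).ofConv x =
    ∑ i, f (cR (b.coord i) x) * g (b i) := by
  change (toConv f * toConv g) x = _
  rw [convMul_apply, comul_eq_sumR b]; simp

lemma conv_sumL (f g : H →ₗ[k] A) (x : H) : (toConv f * toConv g).ofConv x =
    ∑ i, f (b i) * g (cL (b.coord i) x) := by
  change (toConv f * toConv g) x = _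
  rw [convMul_apply, comul_eq_sumL b]; simp

end basics
end IndPer

open scoped TensorProduct

set_option linter.unusedSectionVars false
namespace IndPer

open Coalgebra HopfAlgebra WithConv LinearMap

section integral
lemma comp_sum' {k U V W ι : Type*} [Field k] [AddCommGroup U] [Module k U] [AddCommGroup V]
    [Module k V] [AddCommGroup W] [Module k W] [Fintype ι] (g : V →ₗ[k] W) (f : ι → U →ₗ[k] V) :
    g ∘ₗ ∑ i, f i = ∑ i, g ∘ₗ f i := by
  ext x; simp
lemma sum_comp' {k U V W ι : Type*} [Field k] [AddCommGroup U] [Module k U] [AddCommGroup V]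
    [Module k V] [AddCommGroup W] [Module k W] [Fintype ι] (g : U →ₗ[k] V) (f : ι → V →ₗ[k] W) :
    (∑ i, f i) ∘ₗ g = ∑ i, f i ∘ₗ g := by
  ext x; simp

variable {k H : Type*} [Field k] [Ring H] [HopfAlgebra k H] [FiniteDimensional k H]
variable {ι : Type*} [Fintype ι] (b : Module.Basis ι k H)

variable (k H) in
noncomputable abbrev oH2 : H →ₐ[k] (H ⊗[k] H)ᵐᵒᵖ :=
  (AlgHom.op (inl k H)).comp (antipodeAlgHomOp k H)

lemma comul_S2_op : toConv ((MulOpposite.opLinearEquiv k).toLinearMap ∘ₗ comul ∘ₗ SS k H ∘ₗ SS k H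
      : H →ₗ[k] (H ⊗[k] H)ᵐᵒᵖ) =
    toConv ((oH2 k H).toLinearMap ∘ₗ SS k H) *
      toConv ((MulOpposite.opLinearEquiv k).toLinearMap ∘ₗ (inr k H).toLinearMap
        ∘ₗ SS k H ∘ₗ SS k H) := by
  apply WithConv.ext
  ext x
  rw [conv_apply]
  simp only [LinearMap.comp_apply, comul_S2, map_sum]
  refine Finset.sum_congr rfl fun i _ => ?_
  apply MulOpposite.unop_injective
  simp [oH2, antipodeAlgHomOp]

lemma intA_key (z : H) : ∑ i, comul (R := k) (SS k H (SS k H (cL (b.coord i) z))) *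
    (SS k H (b i) ⊗ₜ[k] (1 : H)) = 1 ⊗ₜ SS k H (SS k H z) := by
  have h : toConv (oH2 k H).toLinearMap * toConv ((MulOpposite.opLinearEquiv k).toLinearMap ∘ₗ
      comul ∘ₗ SS k H ∘ₗ SS k H) =
      toConv ((MulOpposite.opLinearEquiv k).toLinearMap ∘ₗ (inr k H).toLinearMap
        ∘ₗ SS k H ∘ₗ SS k H) := by
    rw [comul_S2_op, ← mul_assoc, S_hom, one_mul]
  have h2 := congrArg (fun f => MulOpposite.unop (f.ofConv z)) h
  simp only [conv_sumL b] at h2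
  simpa [oH2, antipodeAlgHomOp] using h2

lemma intA (φ : H →ₗ[k] k) (y : H) :
    mulLeft k (cL φ y) ∘ₗ SS k H ∘ₗ SS k H = ∑ i, cL (φ ∘ₗ mulRight k (SS k H (b i))) ∘ₗ
      (mulLeft k y ∘ₗ SS k H ∘ₗ SS k H) ∘ₗ cL (b.coord i) := by
  ext z
  have e1 : ∀ (h v : H), cL (φ ∘ₗ mulRight k h) v = TensorProduct.lid k H
      (TensorProduct.map φ LinearMap.id (comul v * (h ⊗ₜ 1))) := fun h v => by
    rw [cL_eq_lid, repr_eq v]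
    simp [Finset.sum_mul]
  have e2 : ∀ (h v : H), cL φ v * h = TensorProduct.lid k H
      (TensorProduct.map φ LinearMap.id (comul v * (1 ⊗ₜ h))) := fun h v => by
    rw [cL_eq_lid, repr_eq v]
    simp [Finset.sum_mul]
  simp only [LinearMap.comp_apply, LinearMap.sum_apply, mulLeft_apply, e1, e2, Bialgebra.comul_mul,
    ← intA_key b z, ← map_sum, Finset.mul_sum, mul_assoc]

lemma intB (φ : H →ₗ[k] k) :
    ∑ i, cL (b.coord i) ∘ₗ cL (φ ∘ₗ mulRight k (SS k H (b i))) = φ 1 • LinearMap.id := by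
  apply toConv_injective
  have h : ∑ i, toConv (sc H (φ ∘ₗ mulRight k (SS k H (b i)))) * toConv (sc H (b.coord i)) =
      φ 1 • (1 : WithConv (H →ₗ[k] H)) := by
    apply WithConv.ext
    ext x
    have h0 := congrArg (fun f => f.ofConv x) (I_mul_S (k := k) (H := H))
    simp only [conv_apply] at h0
    have h1 : ∑ i ∈ (ℛ k x).index, φ ((ℛ k x).left i * SS k H ((ℛ k x).right i)) =
        counit (R := k) x * φ 1 := by
      have := congrArg φ h0
      rw [map_sum] at this
      refine this.trans ?_
      change φ (algebraMap k H (counit x)) = _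
      rw [Algebra.algebraMap_eq_smul_one, map_smul, smul_eq_mul]
    have h2 : ∀ (u v : H), ∑ i, φ (u * SS k H (b i)) * b.coord i v = φ (u * SS k H v) := by
      intro u v
      conv_rhs => rw [← b.sum_repr v]
      simp only [map_sum, map_smul, Finset.mul_sum, mul_smul_comm, smul_eq_mul,
        Module.Basis.coord_apply, mul_comm]
    rw [ofConv_sum, LinearMap.sum_apply]
    simp only [conv_apply, sc_apply, LinearMap.comp_apply, mulRight_apply]
    rw [Finset.sum_comm]
    simp only [← map_mul, ← map_sum, h2, h1]
    change _ = φ 1 • algebraMap k H (counit x)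
    rw [Algebra.smul_def, ← map_mul, mul_comm]
  have h3 : ∀ i, toConv (cL (b.coord i) ∘ₗ cL (φ ∘ₗ mulRight k (SS k H (b i)))) = 
     toConv (sc H (φ ∘ₗ mulRight k (SS k H (b i)))) * toConv (sc H (b.coord i)) * 
      toConv LinearMap.id := fun i => by
    rw [comp_cL, mul_assoc]; rfl
  rw [toConv_sum]
  simp only [h3]
  rw [← Finset.sum_mul, h, smul_mul_assoc, one_mul]
  rfl

/-- candidates for left integrals -/
noncomputable def PP (f : H →ₗ[k] k) : H →ₗ[k] k :=
  LinearMap.trace k H ∘ₗ (LinearMap.llcomp k H H H (cR f)) ∘ₗ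
   (LinearMap.lcomp k H (SS k H ∘ₗ SS k H)) ∘ₗ LinearMap.mul k H

lemma PP_apply (f : H →ₗ[k] k) (y : H) : PP f y =
   LinearMap.trace k H (cR f ∘ₗ mulLeft k y ∘ₗ SS k H ∘ₗ SS k H) := rfl

lemma PP_cL (f φ : H →ₗ[k] k) (y : H) : PP f (cL φ y) = φ 1 * PP f y := by
  let b := Module.finBasis k H
  rw [PP_apply, PP_apply, intA b, comp_sum', map_sum]
  have : ∀ (X : H →ₗ[k] H) i, LinearMap.trace k H (cR f ∘ₗ cL (φ ∘ₗ mulRight k (SS k H (b i))) ∘ₗ X ∘ₗ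
      cL (b.coord i)) = LinearMap.trace k H
       ((cL (b.coord i) ∘ₗ cL (φ ∘ₗ mulRight k (SS k H (b i)))) ∘ₗ cR f ∘ₗ X) := fun X i => by
    have e : cR f ∘ₗ cL (φ ∘ₗ mulRight k (SS k H (b i))) ∘ₗ X ∘ₗ cL (b.coord i) =
      ((cL (φ ∘ₗ mulRight k (SS k H (b i))) ∘ₗ cR f) ∘ₗ X) ∘ₗ cL (b.coord i) := by
      rw [← cR_cL]; rfl
    rw [e, LinearMap.trace_comp_comm']
    rfl
  rw [Finset.sum_congr rfl fun i _ => this _ i]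
  rw [← map_sum, ← sum_comp', intB]
  rw [LinearMap.smul_comp, LinearMap.id_comp, map_smul, smul_eq_mul]

lemma exists_PP_ne : ∃ f : H →ₗ[k] k, PP f ≠ 0 := by
  by_contra! hc
  let b := Module.finBasis k H
  have h1 : ∑ i, mulLeft k (SS k H (b i)) ∘ₗ (SS k H ∘ₗ SS k H) ∘ₗ cR (b.coord i) =
      Algebra.linearMap k H ∘ₗ counit := by
    ext z
    have := congrArg (fun f => MulOpposite.unop (f.ofConv z)) (hom_S (antipodeAlgHomOp k H))
    simp only [conv_sumR b] at this
    have h2 : MulOpposite.unop ((1 : WithConv (H →ₗ[k] Hᵐᵒᵖ)).ofConv z) = algebraMap k H (counit z) := 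
      rfl
    rw [h2] at this
    simpa [antipodeAlgHomOp] using this
  have h2 := congrArg (LinearMap.trace k H) h1
  rw [LinearMap.trace_comp_comm', map_sum] at h2
  have h3 : ∀ i, LinearMap.trace k H (mulLeft k (SS k H (b i)) ∘ₗ (SS k H ∘ₗ SS k H) ∘ₗ 
      cR (b.coord i)) = 0 := fun i => by
    rw [← LinearMap.comp_assoc, LinearMap.trace_comp_comm', ← PP_apply, hc, LinearMap.zero_apply]
  have h4 : (counit : H →ₗ[k] k) ∘ₗ Algebra.linearMap k H = LinearMap.id := by
    ext; simp
  simp [h3, h4] at h2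

lemma exists_integral : ∃ l : H →ₗ[k] k, l ≠ 0 ∧ ∀ x, cR l x = algebraMap k H (l x) := by
  obtain ⟨f, hf⟩ := exists_PP_ne (k := k) (H := H)
  refine ⟨PP f, hf, fun x => ?_⟩
  rw [← sub_eq_zero, ← Module.forall_dual_apply_eq_zero_iff k]
  intro φ
  have := PP_cL f φ x
  rw [map_sub, sub_eq_zero, Algebra.algebraMap_eq_smul_one, map_smul, smul_eq_mul, mul_comm, ← this,
   cR_apply, cL_apply]
  simp [mul_comm]

end integral
end IndPer

open scoped TensorProduct
set_option linter.unusedSectionVars false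

namespace IndPer

open Coalgebra HopfAlgebra WithConv LinearMap

section nondeg
variable {k H : Type*} [Field k] [Ring H] [HopfAlgebra k H] [FiniteDimensional k H]

/-- contraction of the right leg -/
noncomputable def tR (l : H →ₗ[k] k) : H ⊗[k] H →ₗ[k] H :=
  (TensorProduct.rid k H).toLinearMap ∘ₗ TensorProduct.map LinearMap.id l

/-- contraction of the left leg -/
noncomputable def tL (l : H →ₗ[k] k) : H ⊗[k] H →ₗ[k] H :=
  (TensorProduct.lid k H).toLinearMap ∘ₗ TensorProduct.map l LinearMap.id

@[simp] lemma tR_tmul (l : H →ₗ[k] k) (a b : H) : tR l (a ⊗ₜ b) = l b • a := by simp [tR]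
@[simp] lemma tL_tmul (l : H →ₗ[k] k) (a b : H) : tL l (a ⊗ₜ b) = l a • b := by simp [tL]

lemma tR_comul (l : H →ₗ[k] k) (x : H) : tR l (comul x) = cR l x := (cR_eq_rid l x).symm
lemma tL_comul (l : H →ₗ[k] k) (x : H) : tL l (comul x) = cL l x := (cL_eq_lid l x).symm

lemma tR_mul (l : H →ₗ[k] k) (t : H ⊗[k] H) (a c : H) :
    tR l (t * (a ⊗ₜ c)) = tR l (t * (1 ⊗ₜ c)) * a := by
  induction t with
  | zero => simp
  | add x y hx hy => simp only [add_mul, map_add, hx, hy]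
  | tmul u v => simp

lemma tR_mul' (l : H →ₗ[k] k) (t : H ⊗[k] H) (a c : H) :
    tR l ((a ⊗ₜ c) * t) = a * tR l ((1 ⊗ₜ c) * t) := by
  induction t with
  | zero => simp
  | add x y hx hy => simp only [mul_add, map_add, hx, hy]
  | tmul u v => simp

lemma tL_mul (l : H →ₗ[k] k) (t : H ⊗[k] H) (a c : H) :
    tL l (t * (a ⊗ₜ c)) = tL l (t * (a ⊗ₜ 1)) * c := by
  induction t with
  | zero => simp
  | add x y hx hy => simp only [add_mul, map_add, hx, hy]
  | tmul u v => simp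

lemma dual_cR_cL (f g : H →ₗ[k] k) (x : H) : f (cR g x) = g (cL f x) := by
  simp [cR_apply, cL_apply, mul_comm]


lemma nd_key (l : H →ₗ[k] k) (hi : ∀ x, cR l x = algebraMap k H (l x)) (x y : H) : cL (l ∘ₗ mulLeft k y ∘ₗ SS k H) x = tR l (comul y * (1 ⊗ₜ SS k H x)) := by
  let G : H →ₗ[k] H := tR l ∘ₗ mulLeft k (comul y) ∘ₗ (inr k H).toLinearMap ∘ₗ SS k H
  have h : toConv G * toConv (SS k H) = toConv (sc H (l ∘ₗ mulLeft k y ∘ₗ SS k H)) := by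
    apply WithConv.ext
    ext z
    rw [conv_apply]
    simp only [G, LinearMap.comp_apply, mulLeft_apply, sc_apply]
    rw [← hi, ← tR_comul, Bialgebra.comul_mul, comul_S, Finset.mul_sum, map_sum]
    refine Finset.sum_congr rfl fun i _ => ?_
    rw [tR_mul]
    rfl
  have h2 : toConv G = toConv (cL (l ∘ₗ mulLeft k y ∘ₗ SS k H)) := by
    change _ = toConv (sc H (l ∘ₗ mulLeft k y ∘ₗ SS k H)) * toConv LinearMap.id
    rw [← h, mul_assoc, S_mul_I, mul_one]
  exact (congrArg (fun f => f.ofConv x) h2).symm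

lemma nd_inj (l : H →ₗ[k] k) (hl : l ≠ 0) (hi : ∀ x, cR l x = algebraMap k H (l x)) (x : H) (hx : ∀ y, l (y * SS k H x) = 0) : x = 0 := by
  have h1 : ∀ x : H, (∀ y, l (y * SS k H x) = 0) → ∀ φ : H →ₗ[k] k, ∀ y,
      l (y * SS k H (cR φ x)) = 0 := by
    intro x hx φ y
    have := dual_cR_cL (l ∘ₗ mulLeft k y ∘ₗ SS k H) φ x
    rw [nd_key l hi] at this
    refine this.trans ?_
    rw [repr_eq y]
    simp [Finset.sum_mul, hx]
  have h2 : ∀ x : H, (∀ y, l (y * SS k H x) = 0) → counit (R := k) x = 0 := by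
    intro x hx
    by_contra hc
    apply hl
    ext y
    have h0 := congrArg (fun f => f.ofConv x) (I_mul_S (k := k) (H := H))
    simp only [conv_sumR (Module.finBasis k H)] at h0
    have h3 := congrArg (fun u => l (y * SS k H u)) h0
    have h4 : (ofConv (1 : WithConv (H →ₗ[k] H))) x = (counit (R := k) x) • (1 : H) := by
      rw [← Algebra.algebraMap_eq_smul_one]; rfl
    simp only [h4, map_sum, map_smul, antipode_mul_antidistrib, Finset.mul_sum, antipode_one,
      mul_smul_comm, mul_one, LinearMap.id_apply, smul_eq_mul, ← mul_assoc, h1 x hx,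
      Finset.sum_const_zero] at h3
    simpa [hc] using h3.symm
  rw [← Module.forall_dual_apply_eq_zero_iff k]
  intro φ
  have := h2 _ (h1 x hx φ)
  rwa [dual_cR_cL, cL_counit] at this

lemma S_inj (l : H →ₗ[k] k) (hl : l ≠ 0) (hi : ∀ x, cR l x = algebraMap k H (l x)) : Function.Injective (SS k H) := by
  rw [← LinearMap.ker_eq_bot, LinearMap.ker_eq_bot']
  intro x hx
  exact nd_inj l hl hi x fun y => by rw [hx, mul_zero, map_zero]

lemma S_surj (l : H →ₗ[k] k) (hl : l ≠ 0) (hi : ∀ x, cR l x = algebraMap k H (l x)) : Function.Surjective (SS k H) :=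
  LinearMap.injective_iff_surjective.1 (S_inj l hl hi)

lemma nd_right (l : H →ₗ[k] k) (hl : l ≠ 0) (hi : ∀ x, cR l x = algebraMap k H (l x)) (x : H) (hx : ∀ y, l (y * x) = 0) : x = 0 := by
  obtain ⟨z, rfl⟩ := S_surj l hl hi x
  rw [nd_inj l hl hi z hx, map_zero]

lemma repr_right (l : H →ₗ[k] k) (hl : l ≠ 0) (hi : ∀ x, cR l x = algebraMap k H (l x)) (f : H →ₗ[k] k) : ∃ a, ∀ y, l (y * a) = f y := by
  let Φ : H →ₗ[k] (H →ₗ[k] k) := (LinearMap.llcomp k H H k l) ∘ₗ (LinearMap.mul k H).flip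
  have hinj : Function.Injective Φ := by
    rw [← LinearMap.ker_eq_bot, LinearMap.ker_eq_bot']
    intro x hx
    exact nd_right l hl hi x fun y => LinearMap.congr_fun hx y
  have hs : Function.Surjective Φ :=
    (LinearMap.injective_iff_surjective_of_finrank_eq_finrank
      (Subspace.dual_finrank_eq (K := k) (V := H)).symm).1 hinj
  obtain ⟨a, ha⟩ := hs f
  exact ⟨a, fun y => LinearMap.congr_fun ha y⟩

lemma repr_left (l : H →ₗ[k] k) (hl : l ≠ 0) (hi : ∀ x, cR l x = algebraMap k H (l x)) (f : H →ₗ[k] k) : ∃ a, ∀ y, l (a * y) = f y := by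
  let Φ : H →ₗ[k] (H →ₗ[k] k) := (LinearMap.llcomp k H H k l) ∘ₗ (LinearMap.mul k H)
  have hinj : Function.Injective Φ := by
    rw [← LinearMap.ker_eq_bot, LinearMap.ker_eq_bot']
    intro x hx
    rw [← Module.forall_dual_apply_eq_zero_iff k]
    intro φ
    obtain ⟨a, ha⟩ := repr_right l hl hi φ
    rw [← ha]
    exact LinearMap.congr_fun hx a
  have hs : Function.Surjective Φ :=
    (LinearMap.injective_iff_surjective_of_finrank_eq_finrank
      (Subspace.dual_finrank_eq (K := k) (V := H)).symm).1 hinj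
  obtain ⟨a, ha⟩ := hs f
  exact ⟨a, fun y => LinearMap.congr_fun ha y⟩

lemma exists_N (l : H →ₗ[k] k) (hl : l ≠ 0) (hi : ∀ x, cR l x = algebraMap k H (l x)) : ∃ N : H →ₗ[k] H, ∀ x y, l (x * y) = l (y * N x) := by
  choose N hN using fun x => repr_right l hl hi (l ∘ₗ mulLeft k x)
  have key : ∀ a b : H, (∀ y, l (y * a) = l (y * b)) → a = b := fun a b h => by
    rw [← sub_eq_zero]
    exact nd_right l hl hi _ fun y => by rw [mul_sub, map_sub, h, sub_self]
  refine ⟨⟨⟨N, fun x y => key _ _ fun z => ?_⟩, fun c x => key _ _ fun z => ?_⟩,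
    fun x y => (hN x y).symm⟩
  · rw [hN, mul_add, map_add, hN, hN]; simp [add_mul]
  · rw [hN]; simp [hN]


lemma N_mul (l : H →ₗ[k] k) (hl : l ≠ 0) (hi : ∀ x, cR l x = algebraMap k H (l x)) (N : H →ₗ[k] H) (hN : ∀ x y, l (x * y) = l (y * N x)) (x y : H) : N (x * y) = N x * N y := by
  rw [← sub_eq_zero]
  refine nd_right l hl hi _ fun z => ?_
  rw [mul_sub, map_sub, ← hN, ← mul_assoc, ← hN, mul_assoc, hN, mul_assoc, sub_self]

lemma N_one (l : H →ₗ[k] k) (hl : l ≠ 0) (hi : ∀ x, cR l x = algebraMap k H (l x)) (N : H →ₗ[k] H) (hN : ∀ x y, l (x * y) = l (y * N x)) : N 1 = 1 := by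
  rw [← sub_eq_zero]
  refine nd_right l hl hi _ fun z => ?_
  rw [mul_sub, map_sub, ← hN, one_mul, mul_one, sub_self]

/-- `S(x₁)λ(x₂y) = y₁ λ(x y₂)` -/
lemma A4 (l : H →ₗ[k] k) (hi : ∀ x, cR l x = algebraMap k H (l x)) (x y : H) : SS k H (cR (l ∘ₗ mulRight k y) x) = cR (l ∘ₗ mulLeft k x) y := by
  let G : H →ₗ[k] H := tR l ∘ₗ mulRight k (comul y) ∘ₗ (inr k H).toLinearMap
  have h : toConv LinearMap.id * toConv G = toConv (sc H (l ∘ₗ mulRight k y)) := by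
    apply WithConv.ext
    ext z
    rw [conv_apply]
    simp only [G, LinearMap.comp_apply, mulRight_apply, sc_apply]
    rw [← hi, ← tR_comul, Bialgebra.comul_mul, repr_eq z, Finset.sum_mul, map_sum]
    refine Finset.sum_congr rfl fun i _ => ?_
    rw [tR_mul']
    rfl
  have h2 : toConv G = toConv (SS k H ∘ₗ cR (l ∘ₗ mulRight k y)) := by
    rw [comp_cR, ← h, ← mul_assoc, S_mul_I, one_mul]
  refine (congrArg (fun f => f.ofConv x) h2).symm.trans ?_
  simp only [G, LinearMap.comp_apply, mulRight_apply]
  rw [cR_apply, repr_eq y]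
  simp [Finset.mul_sum]

lemma N_eq (l : H →ₗ[k] k) (hl : l ≠ 0) (hi : ∀ x, cR l x = algebraMap k H (l x)) (N : H →ₗ[k] H) (hN : ∀ x y, l (x * y) = l (y * N x)) (x : H) : N x = SS k H (SS k H (cR (counit ∘ₗ N) x)) := by
  obtain ⟨y, hy⟩ := repr_left l hl hi (counit : H →ₗ[k] k)
  have h1 : l ∘ₗ mulRight k y = counit ∘ₗ N := by
    ext z; simp [hN z y, hy]
  have h2 : l ∘ₗ mulLeft k x = l ∘ₗ mulRight k (N x) := by
    ext z; simp [hN x z]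
  have h3 : l ∘ₗ mulLeft k y = counit := by
    ext z; simp [hy]
  rw [← h1, A4 l hi, h2, A4 l hi, h3, cR_counit]

lemma A5 (l : H →ₗ[k] k) (hl : l ≠ 0) (hi : ∀ x, cR l x = algebraMap k H (l x)) (f : H →ₗ[k] k) (hf : ∀ x, cR f x = algebraMap k H (f x)) : ∃ c : k, f = c • l := by
  obtain ⟨a, ha⟩ := repr_right l hl hi f
  obtain ⟨y, hy⟩ := repr_left l hl hi (counit : H →ₗ[k] k)
  have h1 : l ∘ₗ mulRight k a = f := by
    ext z; simp [ha]
  have h3 : l ∘ₗ mulLeft k y = counit := by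
    ext z; simp [hy]
  have h2 := A4 l hi y a
  rw [h1, h3, cR_counit, hf, Algebra.algebraMap_eq_smul_one, map_smul, antipode_one] at h2
  refine ⟨f y, ?_⟩
  ext z
  rw [← ha z, ← h2]
  simp

lemma exists_g (l : H →ₗ[k] k) (hl : l ≠ 0) (hi : ∀ x, cR l x = algebraMap k H (l x)) : ∃ g : H, IsGroupLikeElem k g ∧ ∀ x, cL l x = l x • g := by
  obtain ⟨x0, hx0⟩ : ∃ x0, l x0 = 1 := by
    obtain ⟨x, hx⟩ : ∃ x, l x ≠ 0 := by
      by_contra! hc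
      exact hl (LinearMap.ext hc)
    exact ⟨(l x)⁻¹ • x, by simp [hx]⟩
  have h1 : ∀ x, cL l x = l x • cL l x0 := by
    intro x
    rw [← sub_eq_zero, ← Module.forall_dual_apply_eq_zero_iff k]
    intro φ
    have e : toConv (sc H (φ ∘ₗ cL l)) = toConv (sc H l) * toConv (sc H φ) := by
      rw [← comp_cL]; rfl
    obtain ⟨c, hc⟩ := A5 l hl hi (φ ∘ₗ cL l) (fun z => by
      have e1 : cR (φ ∘ₗ cL l) = sc H (φ ∘ₗ cL l) := by
        apply toConv_injective
        change toConv LinearMap.id * toConv (sc H (φ ∘ₗ cL l)) = _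
        rw [e, ← mul_assoc]
        congr 1
        apply WithConv.ext
        ext z
        exact hi z
      rw [e1]; rfl)
    have h3 := LinearMap.congr_fun hc x
    have h4 := LinearMap.congr_fun hc x0
    simp only [LinearMap.comp_apply, LinearMap.smul_apply, smul_eq_mul, hx0, mul_one] at h3 h4
    simp [h3, h4, mul_comm]
  refine ⟨cL l x0, ⟨?_, ?_⟩, h1⟩
  · rw [← dual_cR_cL, cR_counit, hx0]
  · have e : comul ∘ₗ cL l = TensorProduct.map (cL l) LinearMap.id ∘ₗ
        (comul : H →ₗ[k] H ⊗[k] H) := by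
      have e1 : TensorProduct.map (cL l) LinearMap.id ∘ₗ (comul : H →ₗ[k] H ⊗[k] H) = 
          (toConv ((inl k H).toLinearMap ∘ₗ cL l) * toConv (inr k H).toLinearMap).ofConv := by
        ext x
        rw [conv_apply]
        simp only [LinearMap.comp_apply]
        rw [repr_eq x]
        simp
      apply toConv_injective
      rw [e1, comp_cL, comp_cL, comul_eq_conv, mul_assoc]
    have e2 := LinearMap.congr_fun e x0
    simp only [LinearMap.comp_apply] at e2
    rw [e2]
    have e3 : ∀ z : H ⊗[k] H, TensorProduct.map (cL l) LinearMap.id z = cL l x0 ⊗ₜ tL l z := by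
      intro z
      induction z with
      | zero => simp
      | add x y hx hy => simp only [map_add, hx, hy, TensorProduct.tmul_add]
      | tmul u v => simp [h1 u, TensorProduct.smul_tmul]
    rw [e3, tL_comul]


/-- `λ(x₁y)x₂ = λ(x y₁) g S(y₂)` -/
lemma A6 (l : H →ₗ[k] k) (g : H) (hg : ∀ x, cL l x = l x • g) (x y : H) : cL (l ∘ₗ mulRight k y) x = g * SS k H (cL (l ∘ₗ mulLeft k x) y) := by
  let G : H →ₗ[k] H := tL l ∘ₗ mulLeft k (comul x) ∘ₗ (inl k H).toLinearMap
  have h : toConv G * toConv LinearMap.id = toConv (mulLeft k g ∘ₗ sc H (l ∘ₗ mulLeft k x)) := by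
    apply WithConv.ext
    ext z
    rw [conv_apply]
    simp only [G, LinearMap.comp_apply, mulLeft_apply, sc_apply, ← Algebra.commutes]
    rw [← Algebra.smul_def, ← hg, ← tL_comul, Bialgebra.comul_mul, repr_eq z, Finset.mul_sum,
      map_sum]
    refine Finset.sum_congr rfl fun i _ => ?_
    rw [tL_mul]
    rfl
  have h2 : toConv G = toConv (mulLeft k g ∘ₗ SS k H ∘ₗ cL (l ∘ₗ mulLeft k x)) := by
    have : toConv G = toConv (mulLeft k g ∘ₗ sc H (l ∘ₗ mulLeft k x)) * toConv (SS k H) := by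
      rw [← h, mul_assoc, I_mul_S, mul_one]
    rw [this]
    apply WithConv.ext
    ext z
    rw [conv_apply]
    simp [cL_apply, Finset.mul_sum, Algebra.smul_def, mul_assoc]
    refine Finset.sum_congr rfl fun i _ => ?_
    rw [← Algebra.smul_def, ← Algebra.smul_def, map_smul]
  refine Eq.trans ?_ (congrArg (fun f => f.ofConv y) h2)
  simp only [G, LinearMap.comp_apply, mulLeft_apply]
  rw [cL_apply, repr_eq x]
  simp [Finset.sum_mul]

lemma radford1 (l : H →ₗ[k] k) (hl : l ≠ 0) (hi : ∀ x, cR l x = algebraMap k H (l x)) (N : H →ₗ[k] H) (hN : ∀ x y, l (x * y) = l (y * N x)) (g : H) (hg : ∀ x, cL l x = l x • g) (x : H) : cL (counit ∘ₗ N) x = g * SS k H (SS k H (N x)) * SS k H g := by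
  obtain ⟨y, hy⟩ := repr_left l hl hi (counit : H →ₗ[k] k)
  have h1 : l ∘ₗ mulRight k y = counit ∘ₗ N := by
    ext z; simp [hN z y, hy]
  have h2 : l ∘ₗ mulLeft k x = l ∘ₗ mulRight k (N x) := by
    ext z; simp [hN x z]
  have h3 : l ∘ₗ mulLeft k y = counit := by
    ext z; simp [hy]
  rw [← h1, A6 l g hg, h2, A6 l g hg, h3, cL_counit, antipode_mul_antidistrib, mul_assoc]

end nondeg
end IndPer

open scoped TensorProduct
set_option linter.unusedSectionVars false

namespace IndPer

open Coalgebra HopfAlgebra WithConv LinearMap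

section order
variable {k H : Type*} [Field k] [Ring H] [HopfAlgebra k H] [FiniteDimensional k H]

lemma finite_algHom : Finite (H →ₐ[k] k) := by
  have h : LinearIndependent k (fun f : H →ₐ[k] k => f.toLinearMap) := by
    have := (linearIndependent_monoidHom H k).comp (fun f : H →ₐ[k] k => (f : H →* k))
      (fun f g hfg => by ext x; exact DFunLike.congr_fun hfg x)
    refine LinearIndependent.of_comp (LinearMap.ltoFun k H k k) ?_
    exact this
  exact h.finite

lemma conv_alg_finOrder (α : H →ₐ[k] k) :
    ∃ T, 0 < T ∧ toConv (sc H α.toLinearMap) ^ T = (1 : WithConv (H →ₗ[k] H)) := by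
  have := finite_algHom (k := k) (H := H)
  have : Finite (WithConv (H →ₐ[k] k)) := Finite.of_equiv _ (WithConv.equiv _).symm
  have key : ∀ n, toConv (sc H α.toLinearMap) ^ n = toConv (sc H (toConv α ^ n).ofConv.toLinearMap) := by
    intro n
    induction n with
    | zero => rfl
    | succ n ih =>
      rw [pow_succ, ih, pow_succ]
      exact comp_mul_of (Algebra.ofId k H) (f := (toConv α ^ n).ofConv.toLinearMap)
        (g := α.toLinearMap) (r := (toConv α ^ n * toConv α).ofConv.toLinearMap) rfl
  obtain ⟨i, j, hij, h⟩ := Finite.exists_ne_map_eq_of_infinite (fun n : ℕ => toConv α ^ n)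
  wlog hlt : i < j generalizing i j
  · exact this j i hij.symm h.symm (by omega)
  refine ⟨j - i, by omega, ?_⟩
  have hu : IsUnit (toConv (sc H α.toLinearMap)) := by
    refine ⟨⟨_, _, S_hom ((Algebra.ofId k H).comp α), hom_S ((Algebra.ofId k H).comp α)⟩, ?_⟩
    rfl
  have h2 : toConv (sc H α.toLinearMap) ^ i * toConv (sc H α.toLinearMap) ^ (j - i) =
      toConv (sc H α.toLinearMap) ^ i * 1 := by
    rw [← pow_add, Nat.add_sub_cancel' hlt.le, key, key, mul_one]
    rw [h]
  exact (hu.pow i).mul_left_cancel h2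

lemma grp_finOrder (g : H) (hg : IsGroupLikeElem k g) : ∃ T, 0 < T ∧ g ^ T = 1 := by
  have h := linearIndep_groupLikeVal (R := k) (A := H)
  have := h.finite
  obtain ⟨T, hT, h2⟩ := isOfFinOrder_iff_pow_eq_one.1 (isOfFinOrder_of_finite (⟨g, hg⟩ : GroupLike k H))
  exact ⟨T, hT, congrArg GroupLike.val h2⟩

lemma cL_pow (f : H →ₗ[k] k) (n : ℕ) : 
    toConv ((cL f : Module.End k H) ^ n) = toConv (sc H f) ^ n * toConv LinearMap.id := by
  induction n with
  | zero => rw [pow_zero, pow_zero, one_mul]; rfl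
  | succ n ih => 
    rw [pow_succ, pow_succ', Module.End.mul_eq_comp, comp_cL, ih, mul_assoc]

lemma cR_pow (f : H →ₗ[k] k) (n : ℕ) : 
    toConv ((cR f : Module.End k H) ^ n) = toConv LinearMap.id * toConv (sc H f) ^ n := by
  induction n with
  | zero => rw [pow_zero, pow_zero, mul_one]; rfl
  | succ n ih => 
    rw [pow_succ, pow_succ, Module.End.mul_eq_comp, comp_cR, ih, mul_assoc]

lemma alpha_S2 (α : H →ₐ[k] k) (x : H) : α (SS k H (SS k H x)) = α x := by
  let β : H →ₐ[k] k := (AlgHom.op α |>.comp (antipodeAlgHomOp k H) |> (AlgEquiv.toOpposite k k).symm.toAlgHom.comp)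
  have hβ : β.toLinearMap = α.toLinearMap ∘ₗ SS k H := by
    ext x; simp [β, antipodeAlgHomOp]
  have h1 := S_hom α
  have h2 := S_hom β
  rw [hβ] at h2
  have := left_inv_eq_right_inv h1 h2
  exact (congrArg (fun f => f.ofConv x) this).symm

lemma exists_S2_order : ∃ T, 0 < T ∧ ((SS k H ∘ₗ SS k H : Module.End k H)) ^ T = 1 := by
  obtain ⟨l, hl, hi⟩ := exists_integral (k := k) (H := H)
  obtain ⟨N, hN⟩ := exists_N l hl hi
  obtain ⟨g, hg, hgl⟩ := exists_g l hl hi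
  let α : H →ₐ[k] k := AlgHom.ofLinearMap (counit ∘ₗ N) (by simp [N_one l hl hi N hN])
    (fun x y => by simp [N_mul l hl hi N hN])
  have hα : α.toLinearMap = counit ∘ₗ N := rfl
  let s : Module.End k H := SS k H ∘ₗ SS k H
  let u : Module.End k H := mulLeft k g
  let v : Module.End k H := mulRight k (SS k H g)
  let r : Module.End k H := cR α.toLinearMap
  let a : Module.End k H := cL α.toLinearMap
  have h1 : a = u * v * (s * s) * r := by
    ext x
    change cL _ x = g * (SS k H (SS k H (SS k H (SS k H (cR _ x)))) * SS k H g)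
    rw [hα, radford1 l hl hi N hN g hgl, ← N_eq l hl hi N hN, mul_assoc]
  have huv : Commute u v := commute_mulLeft_right _ _
  have hSg : SS k H (SS k H g) = g := hg.antipode_antipode
  have hSmul : ∀ x y : H, SS k H (SS k H (x * y)) = SS k H (SS k H x) * SS k H (SS k H y) := by
    intro x y
    simp [antipode_mul_antidistrib]
  have hws : Commute (u * v) s := by
    ext x
    change g * (SS k H (SS k H x) * SS k H g) = SS k H (SS k H (g * (x * SS k H g)))
    rw [hSmul, hSmul, hSg]
  have hsr : Commute s r := by
    ext x
    change SS k H (SS k H (cR _ x)) = cR _ (SS k H (SS k H x))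
    rw [← tR_comul _ (SS k H (SS k H x)), comul_S2, cR_apply]
    simp [alpha_S2]
  have hαg : α g * α (SS k H g) = 1 := by
    rw [← map_mul, hg.mul_antipode_cancel, map_one]
  have hwr : Commute (u * v) r := by
    ext x
    change g * (cR _ x * SS k H g) = cR _ (g * (x * SS k H g))
    have hSg' : comul (R := k) (SS k H g) = SS k H g ⊗ₜ SS k H g := hg.antipode.comul_eq_tmul_self
    rw [← tR_comul _ (g * _), Bialgebra.comul_mul, Bialgebra.comul_mul, hg.comul_eq_tmul_self, hSg',
      cR_apply, repr_eq x]
    simp only [Finset.sum_mul, Finset.mul_sum, map_sum, Algebra.TensorProduct.tmul_mul_tmul, tR_tmul,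
      smul_mul_assoc, mul_smul_comm]
    refine Finset.sum_congr rfl fun i _ => ?_
    congr 1
    simp only [AlgHom.toLinearMap_apply, map_mul]
    linear_combination (-α ((ℛ k x).right i)) * hαg
  obtain ⟨T1, hT1, e1⟩ := conv_alg_finOrder α
  obtain ⟨T2, hT2, e2⟩ := grp_finOrder g hg
  have ea : a ^ T1 = 1 := by
    apply toConv_injective
    rw [cL_pow, e1, one_mul]; rfl
  have er : r ^ T1 = 1 := by
    apply toConv_injective
    rw [cR_pow, e1, mul_one]; rfl
  have eu : u ^ T2 = 1 := by
    simp only [u]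
    rw [pow_mulLeft, e2, mulLeft_one]; rfl
  have ev : v ^ T2 = 1 := by
    simp only [v]
    have : SS k H g ^ T2 = 1 := by
      have h3 : (g * SS k H g) ^ T2 = g ^ T2 * SS k H g ^ T2 := by
        apply Commute.mul_pow
        change _ = _
        rw [hg.mul_antipode_cancel, hg.antipode_mul_cancel]
      rw [hg.mul_antipode_cancel, e2, one_pow, one_mul] at h3
      exact h3.symm
    rw [pow_mulRight, this, mulRight_one]; rfl
  have h3 : a ^ (T1 * T2) = (u * v) ^ (T1 * T2) * (s * s) ^ (T1 * T2) * r ^ (T1 * T2) := by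
    rw [h1, Commute.mul_pow, Commute.mul_pow]
    · exact hws.mul_right hws
    · exact hwr.mul_left (hsr.mul_left hsr)
  rw [huv.mul_pow, pow_mul a, ea, pow_mul r, er, mul_comm T1 T2, pow_mul u, pow_mul v, eu, ev] at h3
  simp only [one_pow, one_mul, mul_one] at h3
  refine ⟨2 * (T2 * T1), by positivity, ?_⟩
  rw [pow_mul, pow_two]
  exact h3.symm

end order
end IndPer

open scoped TensorProduct

namespace IndPer

open Coalgebra HopfAlgebra WithConv LinearMap
set_option linter.unusedSectionVars false

section tens
variable (k H : Type*) [Field k] [Ring H] [HopfAlgebra k H] (m : ℕ)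

abbrev TT (m : ℕ) : Type _ := ⨂[k] (_ : Fin m), H
abbrev DD (m : ℕ) : Type _ := TT k H m ⊗[k] H

noncomputable def J : MultilinearMap k (fun _ : Fin (m + 1) => H) (DD k H m) :=
  MultilinearMap.uncurryRight (M := fun _ : Fin (m + 1) => H)
    ((TensorProduct.mk k (TT k H m) H).compMultilinearMap (PiTensorProduct.tprod k (s := fun _ : Fin m => H)))

lemma J_apply (b : Fin (m + 1) → H) : J k H m b =
    PiTensorProduct.tprod k (fun i : Fin m => b i.castSucc) ⊗ₜ[k] b (Fin.last m) := rfl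

lemma J_snoc (b : Fin m → H) (c : H) : J k H m (Fin.snoc (α := fun _ => H) b c) =
    PiTensorProduct.tprod k b ⊗ₜ[k] c := by
  rw [J_apply]; simp

lemma J_one : J k H m 1 = 1 := rfl

lemma J_mul (b c : Fin (m + 1) → H) : J k H m (b * c) = J k H m b * J k H m c := by
  simp only [J_apply, Algebra.TensorProduct.tmul_mul_tmul, PiTensorProduct.tprod_mul_tprod]
  rfl

lemma J_ext {W : Type*} [AddCommGroup W] [Module k W] {f g : DD k H m →ₗ[k] W}
    (h : ∀ b, f (J k H m b) = g (J k H m b)) : f = g := by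
  apply TensorProduct.ext
  apply PiTensorProduct.ext
  ext b c
  have := h (Fin.snoc (α := fun _ => H) b c)
  rw [J_snoc] at this
  exact this

noncomputable abbrev ii (i : Fin m) : H →ₐ[k] TT k H m := PiTensorProduct.singleAlgHom (A := fun _ : Fin m => H) i

lemma ii_apply (i : Fin m) (h : H) : ii k H m i h = PiTensorProduct.tprod k (Pi.mulSingle (M := fun _ => H) i h) := rfl

noncomputable def kap : TT k H m →ₐ[k] TT k H (m + 1) :=
  PiTensorProduct.liftAlgHom ((LinearMap.applyₗ (1 : H)).compMultilinearMap
    ((PiTensorProduct.tprod k (s := fun _ : Fin (m + 1) => H)).curryRight)) (by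
      simp [PiTensorProduct.one_def]
      congr 1; ext i; refine Fin.lastCases ?_ (fun i => ?_) i <;> simp) (by
      intro x y
      simp
      congr 1; ext i; refine Fin.lastCases ?_ (fun i => ?_) i <;> simp)

lemma kap_tprod (b : Fin m → H) : kap k H m (PiTensorProduct.tprod k b) =
    PiTensorProduct.tprod k (Fin.snoc (α := fun _ => H) b 1) := by
  simp [kap]

lemma kap_ii (i : Fin m) (h : H) : kap k H m (ii k H m i h) = ii k H (m + 1) i.castSucc h := by
  rw [ii_apply, kap_tprod, ii_apply]
  congr 1; ext j; refine Fin.lastCases ?_ (fun j => ?_) j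
  · simp [Pi.mulSingle_apply, (Fin.castSucc_lt_last i).ne']
  · simp [Pi.mulSingle_apply]

lemma kap_mul_last (b : Fin m → H) (h : H) : kap k H m (PiTensorProduct.tprod k b) * ii k H (m + 1) (Fin.last m) h =
    PiTensorProduct.tprod k (Fin.snoc (α := fun _ => H) b h) := by
  rw [kap_tprod, ii_apply, PiTensorProduct.tprod_mul_tprod]
  congr 1; ext j; refine Fin.lastCases ?_ (fun j => ?_) j
  · simp 
  · simp [Pi.mulSingle_apply, (Fin.castSucc_lt_last j).ne]

lemma kap_comm (w : TT k H m) (h : H) : Commute (kap k H m w) (ii k H (m + 1) (Fin.last m) h) := by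
  change _ * _ = _ * _
  induction w using PiTensorProduct.induction_on with
  | smul_tprod r b =>
    rw [map_smul, smul_mul_assoc, mul_smul_comm]
    congr 1
    rw [kap_mul_last]
    rw [kap_tprod, ii_apply, PiTensorProduct.tprod_mul_tprod]
    congr 1; ext j; refine Fin.lastCases ?_ (fun j => ?_) j
    · simp 
    · simp [Pi.mulSingle_apply, (Fin.castSucc_lt_last j).ne]
  | add x y hx hy => rw [map_add, add_mul, mul_add, hx, hy]

noncomputable def DelL : (m : ℕ) → H →ₐ[k] TT k H m
  | 0 => (Algebra.ofId k _).comp (Bialgebra.counitAlgHom k H)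
  | m + 1 => (Algebra.TensorProduct.lift ((kap k H m).comp (DelL m)) (ii k H (m + 1) (Fin.last m))
      (fun x y => kap_comm k H m _ y)).comp (Bialgebra.comulAlgHom k H)

lemma DelL_zero : toConv (DelL k H 0).toLinearMap = 1 := rfl
lemma DelL_succ : toConv (DelL k H (m + 1)).toLinearMap = toConv ((kap k H m).toLinearMap ∘ₗ (DelL k H m).toLinearMap)
    * toConv (ii k H (m + 1) (Fin.last m)).toLinearMap := by
  apply WithConv.ext
  ext x
  rw [conv_apply]
  change (DelL k H (m + 1)) x = _
  simp only [DelL, AlgHom.comp_apply]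
  rw [show (Bialgebra.comulAlgHom k H) x = comul x from rfl, repr_eq x, map_sum]
  refine Finset.sum_congr rfl fun i _ => ?_
  exact Algebra.TensorProduct.lift_tmul _ _ _ _ _

lemma comp_list_prod {A B : Type*} [Ring A] [Algebra k A] [Ring B] [Algebra k B] (χ : A →ₐ[k] B)
    (f : Fin m → (H →ₗ[k] A)) :
    toConv (χ.toLinearMap ∘ₗ (List.ofFn (fun i => toConv (f i))).prod.ofConv) = (List.ofFn (fun i => toConv (χ.toLinearMap ∘ₗ f i))).prod := by
  induction m with
  | zero => simpa using comp_one_of χ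
  | succ m ih =>
    rw [List.ofFn_succ, List.ofFn_succ, List.prod_cons, List.prod_cons, ← ih]
    symm
    exact comp_mul_of χ rfl

lemma DelL_eq : toConv (DelL k H m).toLinearMap = (List.ofFn (fun i => toConv (ii k H m i).toLinearMap)).prod := by
  induction m with
  | zero => simp [DelL_zero]
  | succ m ih =>
    rw [DelL_succ, List.ofFn_succ', List.concat_eq_append, List.prod_append, List.prod_singleton]
    congr 1
    have h : (DelL k H m).toLinearMap = (List.ofFn (fun i => toConv (ii k H m i).toLinearMap)).prod.ofConv := by
      rw [← ih]
    rw [h, comp_list_prod]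
    congr 2
    ext i 
    rw [show (kap k H m).toLinearMap ∘ₗ (ii k H m i).toLinearMap = (ii k H (m + 1) i.castSucc).toLinearMap from LinearMap.ext (kap_ii k H m i)]

noncomputable def jj (i : Fin (m + 1)) : H →ₗ[k] DD k H m := (J k H m).toLinearMap 1 i

lemma jj_apply (i : Fin (m + 1)) (h : H) : jj k H m i h = J k H m (Pi.mulSingle (M := fun _ => H) i h) := rfl

noncomputable def CC' : TT k H m →ₐ[k] DD k H m :=
  PiTensorProduct.liftAlgHom ((J k H m).curryLeft 1) (by
      simp [← J_one]
      congr 1; ext i; refine Fin.cases ?_ (fun i => ?_) i <;> simp) (by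
      intro x y
      simp [← J_mul]
      congr 1; ext i; refine Fin.cases ?_ (fun i => ?_) i <;> simp)

lemma CC'_tprod (b : Fin m → H) : CC' k H m (PiTensorProduct.tprod k b) = J k H m (Fin.cons (α := fun _ => H) 1 b) := by
  simp [CC']

lemma CC'_ii (i : Fin m) (h : H) : CC' k H m (ii k H m i h) = jj k H m i.succ h := by
  rw [ii_apply, CC'_tprod, jj_apply]
  congr 1; ext j; refine Fin.cases ?_ (fun j => ?_) j
  · simp [Pi.mulSingle_apply, (Fin.succ_ne_zero i).symm]
  · simp [Pi.mulSingle_apply]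

noncomputable abbrev inD : TT k H m →ₐ[k] DD k H m := Algebra.TensorProduct.includeLeft
noncomputable abbrev inDr : H →ₐ[k] DD k H m := Algebra.TensorProduct.includeRight

lemma inD_ii (i : Fin m) (h : H) : inD k H m (ii k H m i h) = jj k H m i.castSucc h := by
  rw [ii_apply, jj_apply, J_apply]
  simp [Pi.mulSingle_apply, (Fin.castSucc_lt_last i).ne']
  congr 2; ext j; simp [Pi.mulSingle_apply]

lemma inDr_eq (h : H) : inDr k H m h = jj k H m (Fin.last m) h := by
  rw [jj_apply, J_apply]
  simp [Pi.mulSingle_apply, (Fin.castSucc_lt_last _).ne]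
  rfl

noncomputable def jj0 : H →ₐ[k] DD k H m := AlgHom.ofLinearMap (jj k H m 0)
  (by rw [jj_apply, ← J_one]; congr 1; simp) (by intro x y; simp only [jj_apply, ← J_mul, Pi.mulSingle_mul])

lemma jj0_apply (h : H) : jj0 k H m h = jj k H m 0 h := rfl
lemma jj0_toLin : (jj0 k H m).toLinearMap = jj k H m 0 := rfl

lemma CC'_mul_jj0 (b : Fin m → H) (h : H) : CC' k H m (PiTensorProduct.tprod k b) * jj0 k H m h =
    J k H m (Fin.cons (α := fun _ => H) h b) := by
  rw [CC'_tprod, jj0_apply, jj_apply, ← J_mul]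
  congr 1; ext j; refine Fin.cases ?_ (fun j => ?_) j
  · simp
  · simp [Pi.mulSingle_apply, Fin.succ_ne_zero j]
lemma jj0_mul_CC' (b : Fin m → H) (h : H) : jj0 k H m h * CC' k H m (PiTensorProduct.tprod k b) =
    J k H m (Fin.cons (α := fun _ => H) h b) := by
  rw [CC'_tprod, jj0_apply, jj_apply, ← J_mul]
  congr 1; ext j; refine Fin.cases ?_ (fun j => ?_) j
  · simp
  · simp [Pi.mulSingle_apply, Fin.succ_ne_zero j]

lemma CC'_comm (w : TT k H m) (h : H) : Commute (CC' k H m w) (jj0 k H m h) := by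
  change _ * _ = _ * _
  induction w using PiTensorProduct.induction_on with
  | smul_tprod r b =>
    rw [map_smul, smul_mul_assoc, mul_smul_comm, CC'_mul_jj0, jj0_mul_CC']
  | add x y hx hy => rw [map_add, add_mul, mul_add, hx, hy]

noncomputable def DelN : WithConv (H →ₗ[k] DD k H m) :=
  toConv ((inD k H m).toLinearMap ∘ₗ (DelL k H m).toLinearMap) * toConv (inDr k H m).toLinearMap

lemma DelN_eq : DelN k H m = toConv (jj0 k H m).toLinearMap * toConv ((CC' k H m).toLinearMap ∘ₗ (DelL k H m).toLinearMap) := by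
  have h : (DelL k H m).toLinearMap = (List.ofFn (fun i => toConv (ii k H m i).toLinearMap)).prod.ofConv := by
      rw [← DelL_eq]
  rw [DelN, h, comp_list_prod, comp_list_prod]
  simp only [show ∀ i, (CC' k H m).toLinearMap ∘ₗ (ii k H m i).toLinearMap = jj k H m i.succ from fun i => LinearMap.ext (CC'_ii k H m i),
    show ∀ i, (inD k H m).toLinearMap ∘ₗ (ii k H m i).toLinearMap = jj k H m i.castSucc from fun i => LinearMap.ext (inD_ii k H m i),
    show (inDr k H m).toLinearMap = jj k H m (Fin.last m) from LinearMap.ext (inDr_eq k H m), jj0_toLin]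
  rw [← List.prod_cons, ← List.ofFn_succ (f := fun i => toConv (jj k H m i))]
  rw [List.ofFn_succ', List.concat_eq_append, List.prod_append, List.prod_singleton]

end tens
end IndPer

open scoped TensorProduct

namespace IndPer

open Coalgebra HopfAlgebra WithConv LinearMap
set_option linter.unusedSectionVars false

section tensTwo
variable (k H : Type*) [Field k] [Ring H] [HopfAlgebra k H] (m : ℕ)

noncomputable def S2h : H →ₐ[k] H := AlgHom.ofLinearMap (SS k H ∘ₗ SS k H) (by simp)
  (by intro x y; simp [antipode_mul_antidistrib])

lemma S2h_apply (x : H) : S2h k H x = SS k H (SS k H x) := rfl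

noncomputable def CC : DD k H m →ₐ[k] DD k H m :=
  Algebra.TensorProduct.lift (CC' k H m) ((jj0 k H m).comp (S2h k H)) (fun w _ => CC'_comm k H m w _)

lemma CC_tmul (w : TT k H m) (c : H) : CC k H m (w ⊗ₜ c) = CC' k H m w * jj0 k H m (S2h k H c) :=
  Algebra.TensorProduct.lift_tmul _ _ _ _ _

noncomputable def QQ : DD k H m →ₗ[k] DD k H m :=
  (inD k H m).toLinearMap ∘ₗ LinearMap.mul' k (TT k H m) ∘ₗ TensorProduct.map LinearMap.id ((DelL k H m).toLinearMap ∘ₗ SS k H)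

lemma QQ_tmul (w : TT k H m) (c : H) : QQ k H m (w ⊗ₜ c) = (w * DelL k H m (SS k H c)) ⊗ₜ 1 := by
  simp [QQ]

lemma DelN_apply (h : H) : (DelN k H m).ofConv h = ∑ i ∈ (ℛ k h).index, DelL k H m ((ℛ k h).left i) ⊗ₜ[k] (ℛ k h).right i := by
  rw [DelN, conv_apply]
  simp

lemma QQ_inv (d : DD k H m) (h : H) : QQ k H m (d * (DelN k H m).ofConv h) = counit (R := k) h • QQ k H m d := by
  have key : ∑ i ∈ (ℛ k h).index, DelL k H m ((ℛ k h).left i) * DelL k H m (SS k H ((ℛ k h).right i)) =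
      algebraMap k (TT k H m) (counit h) := by
    have := congrArg (fun f => f.ofConv h) (S_hom (DelL k H m))
    simp only [conv_apply] at this
    exact this
  induction d using TensorProduct.induction_on with
  | zero => simp
  | add x y hx hy => rw [add_mul, map_add, hx, hy, map_add, smul_add]
  | tmul w c =>
    rw [DelN_apply, Finset.mul_sum, map_sum]
    simp only [Algebra.TensorProduct.tmul_mul_tmul, QQ_tmul, antipode_mul_antidistrib, map_mul]
    rw [← TensorProduct.sum_tmul]
    have : ∀ i, w * DelL k H m ((ℛ k h).left i) * (DelL k H m (SS k H ((ℛ k h).right i)) * DelL k H m (SS k H c)) =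
      w * (DelL k H m ((ℛ k h).left i) * DelL k H m (SS k H ((ℛ k h).right i))) * DelL k H m (SS k H c) := by
      intro i; simp only [mul_assoc]
    simp only [this]
    rw [← Finset.sum_mul, ← Finset.mul_sum, key, TensorProduct.smul_tmul']
    rw [← Algebra.commutes, mul_assoc, Algebra.smul_def]

lemma CC'_DelL : toConv ((CC' k H m).toLinearMap ∘ₗ (DelL k H m).toLinearMap) =
    toConv ((jj0 k H m).toLinearMap ∘ₗ SS k H) * DelN k H m := by
  rw [DelN_eq, ← mul_assoc, hom_S, one_mul]

lemma QQ_CC' (d : DD k H m) (h : H) : QQ k H m (d * CC' k H m (DelL k H m h)) = QQ k H m (d * jj0 k H m (SS k H h)) := by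
  have := congrArg (fun f => f.ofConv h) (CC'_DelL k H m)
  have e : CC' k H m (DelL k H m h) = ∑ i ∈ (ℛ k h).index, jj0 k H m (SS k H ((ℛ k h).left i)) * (DelN k H m).ofConv ((ℛ k h).right i) := by
    refine Eq.trans this ?_
    exact conv_apply (f := (jj0 k H m).toLinearMap ∘ₗ SS k H) (g := (DelN k H m).ofConv) h
  rw [e, Finset.mul_sum, map_sum]
  simp only [← mul_assoc, QQ_inv]
  simp only [← map_smul, ← mul_smul_comm, ← map_sum, ← Finset.mul_sum]
  congr 4
  have := cR_counit (k := k) h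
  rwa [cR_apply] at this

lemma QCQ : QQ k H m ∘ₗ (CC k H m).toLinearMap ∘ₗ QQ k H m = QQ k H m ∘ₗ (CC k H m).toLinearMap := by
  apply TensorProduct.ext'
  intro w c
  simp only [LinearMap.comp_apply, QQ_tmul, AlgHom.toLinearMap_apply, CC_tmul, map_mul, map_one, mul_one]
  rw [QQ_CC']
  rfl

lemma CC_J (b : Fin (m + 1) → H) : CC k H m (J k H m b) =
    J k H m (Fin.cons (α := fun _ => H) (S2h k H (b (Fin.last m))) (fun i => b i.castSucc)) := by
  rw [J_apply, CC_tmul, CC'_mul_jj0]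

/-- spiral sequence -/
noncomputable def XX (b : Fin (m + 1) → H) (n : ℕ) : H :=
  (S2h k H)^[n / (m + 1)] (b ⟨m - n % (m + 1), by omega⟩)

lemma XX_add (b : Fin (m + 1) → H) (n : ℕ) : XX k H m b (n + (m + 1)) = S2h k H (XX k H m b n) := by
  simp only [XX, Nat.add_mod_right]
  rw [Nat.add_div_right _ (Nat.succ_pos m), Function.iterate_succ_apply']

lemma CC_pow_J (b : Fin (m + 1) → H) (j : ℕ) : (CC k H m)^[j] (J k H m b) = J k H m (fun i => XX k H m b (j + (m - i.1))) := by
  induction j with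
  | zero =>
    simp only [Function.iterate_zero_apply]
    congr 1; ext i
    have hi := i.2
    simp only [XX]
    rw [Nat.div_eq_of_lt (by omega)]
    simp only [Function.iterate_zero_apply]
    congr 1; ext; simp only
    rw [Nat.mod_eq_of_lt (by omega)]; omega
  | succ j ih =>
    rw [Function.iterate_succ_apply', ih, CC_J]
    congr 1; ext i; refine Fin.cases ?_ (fun i => ?_) i
    · simp only [Fin.cons_zero, ← XX_add, Fin.val_last, Fin.val_zero]
      congr 1; omega
    · simp only [Fin.cons_succ, Fin.val_succ, Fin.val_castSucc]
      congr 1; omega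

lemma XX_mul (b : Fin (m + 1) → H) (n T : ℕ) : XX k H m b (T * (m + 1) + n) = (S2h k H)^[T] (XX k H m b n) := by
  induction T with
  | zero => simp
  | succ T ih => rw [Function.iterate_succ_apply', ← ih, ← XX_add]; congr 1; ring

lemma CC_finOrder [FiniteDimensional k H] : ∃ M, 0 < M ∧ ((CC k H m).toLinearMap : Module.End k (DD k H m)) ^ M = 1 := by
  obtain ⟨T, hT, h⟩ := exists_S2_order (k := k) (H := H)
  have hS : ∀ x, (S2h k H)^[T] x = x := by
    intro x
    have := congrArg (fun f => f x) h
    simp only [Module.End.pow_apply] at this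
    exact this
  refine ⟨T * (m + 1), by positivity, ?_⟩
  apply J_ext
  intro b
  rw [Module.End.pow_apply]
  have h1 := CC_pow_J k H m b (T * (m + 1))
  have h0 := CC_pow_J k H m b 0
  simp only [Function.iterate_zero_apply, zero_add] at h0
  refine h1.trans (Eq.trans ?_ h0.symm)
  simp only [XX_mul, hS]

lemma pow_key {V : Type*} [AddCommGroup V] [Module k V] (C Q : Module.End k V) (h : Q * C * Q = Q * C) (n : ℕ) :
    (C * Q) ^ (n + 1) = C * Q * C ^ n := by
  have h1 : ∀ n, Q * C ^ (n + 1) * Q = Q * C ^ (n + 1) := by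
    intro n
    induction n with
    | zero => simpa using h
    | succ n ih =>
      have e : Q * C ^ (n + 1 + 1) = Q * C * (Q * C ^ (n + 1)) := by
        rw [← mul_assoc, h, pow_succ' C (n + 1), mul_assoc]
      rw [e, mul_assoc, ih]
  induction n with
  | zero => simp
  | succ n ih =>
    rw [pow_succ, ih]
    calc C * Q * C ^ n * (C * Q) = C * (Q * C ^ (n + 1) * Q) := by rw [pow_succ]; simp only [mul_assoc]
      _ = _ := by rw [h1]; simp only [mul_assoc]

lemma CQ_pow [FiniteDimensional k H] : ∃ M, 0 < M ∧
    ((CC k H m).toLinearMap ∘ₗ QQ k H m : Module.End k (DD k H m)) ^ (M + 1) = (CC k H m).toLinearMap ∘ₗ QQ k H m := by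
  obtain ⟨M, hM, h⟩ := CC_finOrder k H m
  refine ⟨M, hM, ?_⟩
  have := pow_key k ((CC k H m).toLinearMap : Module.End k (DD k H m)) (QQ k H m) (by
    rw [mul_assoc]; exact QCQ k H m) M
  rw [h, mul_one] at this
  exact this

end tensTwo

section integ
variable {k V : Type*} [Field k] [AddCommGroup V] [Module k V] [FiniteDimensional k V]

lemma trace_integral (G : Module.End k V) (M : ℕ) (hM : 0 < M) (h : G ^ (M + 1) = G) :
    IsIntegral ℤ (LinearMap.trace k V G) := by
  classical
  let b := Module.finBasis k V
  let K := AlgebraicClosure k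
  let A := (LinearMap.toMatrix b b G)
  have hA : A ^ (M + 1) = A := by
    have := LinearMap.toMatrix_pow b G (M + 1)
    rw [h] at this
    exact this
  let A' := A.map (algebraMap k K)
  have hA' : A' ^ (M + 1) = A' := by
    rw [← Matrix.map_pow, hA]
  have ht : algebraMap k K (LinearMap.trace k V G) = A'.trace := by
    rw [LinearMap.trace_eq_matrix_trace k b]
    exact AddMonoidHom.map_trace (algebraMap k K).toAddMonoidHom A
  have hinj : Function.Injective (algebraMap k K) := (algebraMap k K).injective
  have hi : IsIntegral ℤ A'.trace := by
    rw [Matrix.trace_eq_sum_roots_charpoly]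
    refine IsIntegral.multiset_sum fun μ hμ => ?_
    have h1 := (Polynomial.mem_roots'.1 hμ).2
    rw [← Matrix.mem_spectrum_iff_isRoot_charpoly] at h1
    have h2 := spectrum.subset_polynomial_aeval A' (Polynomial.X ^ (M + 1) - Polynomial.X : Polynomial K) ⟨μ, h1, rfl⟩
    simp only [map_sub, map_pow, Polynomial.aeval_X, hA', sub_self] at h2
    have h3 : Polynomial.eval μ (Polynomial.X ^ (M + 1) - Polynomial.X : Polynomial K) = 0 := by
      by_contra hne
      rw [spectrum.mem_iff] at h2
      apply h2
      rw [sub_zero]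
      exact (isUnit_iff_ne_zero.2 hne).map (algebraMap K _)
    refine ⟨Polynomial.X ^ (M + 1) - Polynomial.X, ?_, ?_⟩
    · apply Polynomial.monic_X_pow_sub
      rw [Polynomial.degree_X]; exact_mod_cast Nat.succ_lt_succ hM
    · simpa using h3
  rw [← ht] at hi
  exact (isIntegral_algebraMap_iff hinj).1 hi

end integ
end IndPer

open scoped TensorProduct

namespace IndPer

open Coalgebra HopfAlgebra WithConv LinearMap
set_option linter.unusedSectionVars false

section path
variable {k H ι : Type*} [Field k] [Ring H] [Algebra k H] [Fintype ι] (b : Module.Basis ι k H)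

lemma path_lemma (m : ℕ) (a : H) (t : Fin (m + 1) → H) (φ : H →ₗ[k] k) :
    ∑ f : Fin m → ι, (∏ j : Fin m, b.coord (f j) ((Fin.cons (α := fun _ => H) a (fun i => b (f i)) : Fin (m + 1) → H) j.castSucc * t j.castSucc)) *
      φ ((Fin.cons (α := fun _ => H) a (fun i => b (f i)) : Fin (m + 1) → H) (Fin.last m) * t (Fin.last m)) =
    φ (a * (List.ofFn t).prod) := by
  induction m generalizing a with
  | zero => simp
  | succ m ih =>
    rw [← (Fin.consEquiv (fun _ : Fin (m + 1) => ι)).sum_comp, Fintype.sum_prod_type]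
    have e : ∀ (i : ι) (f : Fin m → ι), (fun j => b ((Fin.cons (α := fun _ => ι) i f : Fin (m + 1) → ι) j)) =
        Fin.cons (α := fun _ => H) (b i) (fun j => b (f j)) := by
      intro i f; ext j; refine Fin.cases ?_ (fun j => ?_) j <;> simp
    simp only [Fin.consEquiv, Equiv.coe_fn_mk, e, Fin.prod_univ_succ, Fin.cons_zero, Fin.castSucc_zero, Fin.cons_succ, ← Fin.succ_castSucc, ← Fin.succ_last, mul_assoc, ← Finset.mul_sum]
    simp only [fun i => ih (b i) (fun j => t j.succ)]
    rw [show (List.ofFn t).prod = t 0 * (List.ofFn (fun j : Fin (m + 1) => t j.succ)).prod by rw [List.ofFn_succ, List.prod_cons]]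
    conv_rhs => rw [← mul_assoc, ← b.sum_repr (a * t 0), Finset.sum_mul, map_sum]
    simp

end path

section tr
variable (k H : Type*) [Field k] [Ring H] [HopfAlgebra k H] (m : ℕ)

noncomputable def mulT : TT k H m →ₗ[k] H := PiTensorProduct.lift (MultilinearMap.mkPiAlgebraFin k m H)

lemma mulT_tprod (b : Fin m → H) : mulT k H m (PiTensorProduct.tprod k b) = (List.ofFn b).prod := by
  simp [mulT]

noncomputable def mulAll : DD k H m →ₗ[k] H := LinearMap.mul' k H ∘ₗ TensorProduct.map (mulT k H m) LinearMap.id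

lemma mulAll_J (t : Fin (m + 1) → H) : mulAll k H m (J k H m t) = (List.ofFn t).prod := by
  rw [J_apply, List.ofFn_succ', List.concat_eq_append, List.prod_append, List.prod_singleton]
  simp [mulAll, mulT_tprod]

lemma mulAll_CC' (w : TT k H m) : mulAll k H m (CC' k H m w) = mulT k H m w := by
  have : mulAll k H m ∘ₗ (CC' k H m).toLinearMap = mulT k H m := by
    apply PiTensorProduct.ext
    ext b
    simp only [LinearMap.compMultilinearMap_apply, LinearMap.comp_apply, AlgHom.toLinearMap_apply, CC'_tprod, mulAll_J, mulT_tprod]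
    simp
  exact congrArg (fun f => f w) this

lemma mulT_kap (w : TT k H m) (h : H) : mulT k H (m + 1) (kap k H m w * ii k H (m + 1) (Fin.last m) h) = mulT k H m w * h := by
  induction w using PiTensorProduct.induction_on with
  | smul_tprod r b =>
    rw [map_smul, smul_mul_assoc, map_smul, kap_mul_last, mulT_tprod, map_smul, smul_mul_assoc, mulT_tprod,
      List.ofFn_succ', List.concat_eq_append, List.prod_append, List.prod_singleton]
    simp
  | add x y hx hy => rw [map_add, add_mul, map_add, map_add, add_mul, hx, hy]

lemma mulT_DelL (h : H) : mulT k H m (DelL k H m h) = sweedlerPower k H m h := by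
  induction m generalizing h with
  | zero =>
    change mulT k H 0 (algebraMap k _ (counit h)) = algebraMap k H (counit h)
    rw [Algebra.algebraMap_eq_smul_one, map_smul, Algebra.algebraMap_eq_smul_one, PiTensorProduct.one_def, mulT_tprod]
    simp
  | succ m ih =>
    have := congrArg (fun f => f.ofConv h) (DelL_succ k H m)
    simp only [conv_apply] at this
    refine (congrArg (mulT k H (m + 1)) this).trans ?_
    rw [map_sum]
    simp only [LinearMap.comp_apply, AlgHom.toLinearMap_apply, mulT_kap, ih]
    simp only [sweedlerPower, LinearMap.comp_apply]
    rw [repr_eq h, map_sum, map_sum]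
    simp

variable {ι : Type*} [Fintype ι] [DecidableEq ι]

noncomputable def bD (b : Module.Basis ι k H) : Module.Basis ((Fin m → ι) × ι) k (DD k H m) :=
  (Basis.piTensorProduct (fun _ : Fin m => b)).tensorProduct b

lemma bD_apply (b : Module.Basis ι k H) (f : Fin m → ι) (l : ι) : bD k H m b (f, l) = PiTensorProduct.tprod k (fun i => b (f i)) ⊗ₜ b l := by
  simp [bD]

lemma bD_coord (b : Module.Basis ι k H) (f : Fin m → ι) (l : ι) (t : Fin (m + 1) → H) : (bD k H m b).coord (f, l) (J k H m t) =
    (∏ j : Fin m, b.coord (f j) (t j.castSucc)) * b.coord l (t (Fin.last m)) := by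
  rw [J_apply]
  simp [bD, Basis.piTensorProduct_repr_tprod_apply, mul_comm]

lemma sum_coord (b : Module.Basis ι k H) (l : ι) (x : DD k H m) : ∑ f : Fin m → ι, (bD k H m b).coord (f, l) (CC' k H m (PiTensorProduct.tprod k (fun i => b (f i))) * x) =
    b.coord l (mulAll k H m x) := by
  have : ∑ f : Fin m → ι, (bD k H m b).coord (f, l) ∘ₗ LinearMap.mulLeft k (CC' k H m (PiTensorProduct.tprod k (fun i => b (f i)))) =
      b.coord l ∘ₗ mulAll k H m := by
    apply J_ext
    intro t
    simp only [LinearMap.sum_apply, LinearMap.comp_apply, LinearMap.mulLeft_apply, CC'_tprod, ← J_mul, bD_coord, mulAll_J, Pi.mul_apply]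
    rw [path_lemma b m 1 t (b.coord l), one_mul]
  have := congrArg (fun f => f x) this
  simpa only [LinearMap.sum_apply, LinearMap.comp_apply, LinearMap.mulLeft_apply] using this

lemma trace_CQ (b : Module.Basis ι k H) : LinearMap.trace k (DD k H m) ((CC k H m).toLinearMap ∘ₗ QQ k H m) =
    LinearMap.trace k H (SS k H ∘ₗ sweedlerPower k H m) := by
  classical
  haveI : Module.Finite k H := Module.Finite.of_basis b
  rw [LinearMap.trace_comp_comm' (sweedlerPower k H m) (SS k H), LinearMap.trace_eq_matrix_trace k b,
    LinearMap.trace_eq_matrix_trace k (bD k H m b), Matrix.trace, Matrix.trace, Fintype.sum_prod_type_right]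
  refine Finset.sum_congr rfl fun l _ => ?_
  simp only [Matrix.diag_apply, LinearMap.toMatrix_apply, LinearMap.comp_apply, bD_apply, QQ_tmul, AlgHom.toLinearMap_apply, CC_tmul, map_mul, map_one, mul_one]
  refine (sum_coord k H m b l _).trans ?_
  rw [mulAll_CC', mulT_DelL]
  rfl

lemma ind_integral [FiniteDimensional k H] (n : ℕ) : IsIntegral ℤ (LinearMap.trace k H (SS k H ∘ₗ sweedlerPower k H n)) := by
  classical
  obtain ⟨M, hM, h⟩ := CQ_pow k H n
  have b := Module.finBasis k H
  rw [← trace_CQ k H n b]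
  haveI := Module.Finite.of_basis (bD k H n b)
  exact trace_integral _ M hM h

end tr
end IndPer

open scoped TensorProduct

namespace IndPer

open Coalgebra HopfAlgebra WithConv LinearMap
set_option linter.unusedSectionVars false

section seqs
variable {k : Type*} [Field k]

lemma seq_backward (a : ℕ → k) (d : ℕ) (q : ℕ → k) (hq0 : q 0 ≠ 0)
    (hrec : ∀ n, ∑ i ∈ Finset.range (d + 1), q i * a (n + i) = 0) (T N : ℕ)
    (hN : ∀ n, N ≤ n → a (n + T) = a n) : ∀ n, a (n + T) = a n := by
  induction N with
  | zero => intro n; exact hN n (Nat.zero_le n)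
  | succ N ih =>
    apply ih
    intro n hn
    rcases Nat.lt_or_ge N n with h | h
    · exact hN n h
    · obtain rfl : n = N := le_antisymm h hn
      have h1 := hrec n
      have h2 := hrec (n + T)
      rw [Finset.sum_range_succ'] at h1 h2
      have h3 : ∑ i ∈ Finset.range d, q (i + 1) * a (n + T + (i + 1)) = ∑ i ∈ Finset.range d, q (i + 1) * a (n + (i + 1)) := by
        refine Finset.sum_congr rfl fun i _ => ?_
        rw [← hN (n + (i + 1)) (by omega)]
        congr 2; omega
      rw [h3, ← h1] at h2
      simpa [hq0] using h2

lemma seq_periodic_finite (K : Set k) [Finite K] (a : ℕ → k) (haK : ∀ n, a n ∈ K) (d : ℕ) (c : ℕ → k)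
    (hrec : ∀ n, a (n + d) = ∑ i ∈ Finset.range d, c i * a (n + i)) :
    ∃ T N, 0 < T ∧ ∀ n, N ≤ n → a (n + T) = a n := by
  obtain ⟨x, y, hne, hxy⟩ := Finite.exists_ne_map_eq_of_infinite (fun n : ℕ => (fun i : Fin d => (⟨a (n + i), haK _⟩ : K)))
  wlog hlt : x < y generalizing x y
  · exact this y x hne.symm hxy.symm (by omega)
  have key : ∀ t, a (x + t) = a (y + t) := by
    intro t
    induction t using Nat.strong_induction_on with
    | _ t ih =>
      rcases Nat.lt_or_ge t d with h | h
      · have := congrFun hxy ⟨t, h⟩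
        exact congrArg Subtype.val this
      · obtain ⟨s, rfl⟩ := Nat.exists_eq_add_of_le' h
        rw [← add_assoc, ← add_assoc, hrec, hrec]
        refine Finset.sum_congr rfl fun i hi => ?_
        rw [add_assoc, add_assoc, ih (s + i) (by have := Finset.mem_range.1 hi; omega)]
  refine ⟨y - x, x, by omega, fun n hn => ?_⟩
  have := key (n - x)
  rw [show x + (n - x) = n by omega] at this
  rw [this]; congr 1; omega

lemma seq_periodic (p : ℕ) (hp : 0 < p) [CharP k p] (a : ℕ → k) (ha : ∀ n, IsIntegral ℤ (a n)) (d : ℕ) (q : ℕ → k) (hq0 : q 0 ≠ 0)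
    (hqd : q d = 1)
    (hrec : ∀ n, ∑ i ∈ Finset.range (d + 1), q i * a (n + i) = 0) :
    ∃ T, 0 < T ∧ ∀ n, a (n + T) = a n := by
  have hprime : p.Prime := (CharP.char_is_prime_or_zero k p).resolve_right hp.ne'
  haveI : Fact p.Prime := ⟨hprime⟩
  letI : Algebra (ZMod p) k := ZMod.algebra k p
  haveI : IsScalarTower ℤ (ZMod p) k := IsScalarTower.of_algebraMap_eq' (RingHom.ext_int _ _)
  have ha' : ∀ n, IsIntegral (ZMod p) (a n) := fun n => (ha n).tower_top
  let F := algebraicClosure (ZMod p) k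
  have haF : ∀ n, a n ∈ F := fun n => (mem_algebraicClosure_iff).2 (ha' n).isAlgebraic
  obtain ⟨π, hπ⟩ := LinearMap.exists_leftInverse_of_injective (Algebra.linearMap F k)
    (LinearMap.ker_eq_bot.2 (algebraMap F k).injective)
  have hπ1 : π 1 = 1 := by
    have := congrArg (fun f => f 1) hπ
    simpa using this
  let c : ℕ → k := fun i => - (π (q i) : k)
  have hrec' : ∀ n, a (n + d) = ∑ i ∈ Finset.range d, c i * a (n + i) := by
    intro n
    have h1 := congrArg (fun x => (π x : k)) (hrec n)
    simp only [map_sum, map_zero] at h1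
    have h2 : ∀ i, π (q i * a (n + i)) = ⟨a (n + i), haF _⟩ * π (q i) := by
      intro i
      rw [mul_comm]
      exact map_smul π (⟨a (n + i), haF _⟩ : F) (q i)
    simp only [h2] at h1
    rw [Finset.sum_range_succ, hqd, hπ1, mul_one] at h1
    push_cast at h1
    have h3 := eq_neg_of_add_eq_zero_right h1
    rw [h3, ← Finset.sum_neg_distrib]
    refine Finset.sum_congr rfl fun i _ => ?_
    simp only [c]; ring
  let s : Set k := Set.image a (Set.Iio d) ∪ Set.image c (Set.Iio d)
  have hsi : ∀ x ∈ s, IsIntegral (ZMod p) x := by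
    intro x hx
    rcases hx with ⟨i, _, rfl⟩ | ⟨i, _, rfl⟩
    · exact ha' i
    · exact ((mem_algebraicClosure_iff.1 (π (q i)).2).isIntegral).neg
  let K := IntermediateField.adjoin (ZMod p) s
  haveI : Finite s := (((Set.finite_Iio d).image a).union ((Set.finite_Iio d).image c)).to_subtype
  haveI : FiniteDimensional (ZMod p) K := IntermediateField.finiteDimensional_adjoin hsi
  haveI : Finite K := Module.finite_of_finite (ZMod p)
  have hsK : s ⊆ K := IntermediateField.subset_adjoin _ _
  have haK : ∀ n, a n ∈ K := by
    intro n
    induction n using Nat.strong_induction_on with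
    | _ n ih =>
      rcases Nat.lt_or_ge n d with h | h
      · exact hsK (Or.inl ⟨n, h, rfl⟩)
      · obtain ⟨t, rfl⟩ := Nat.exists_eq_add_of_le' h
        rw [hrec']
        refine sum_mem fun i hi => mul_mem ?_ (ih _ (by have := Finset.mem_range.1 hi; omega))
        exact hsK (Or.inr ⟨i, Finset.mem_range.1 hi, rfl⟩)
  haveI : Finite (K : Set k) := ‹Finite K›
  obtain ⟨T, N, hT, h⟩ := seq_periodic_finite (K : Set k) a haK d c hrec'
  exact ⟨T, hT, seq_backward a d q hq0 hrec T N h⟩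

lemma end_periodic {V : Type*} [AddCommGroup V] [Module k V] [FiniteDimensional k V] (p : ℕ) (hp : 0 < p) [CharP k p]
    (M : Module.End k V) (hM : Function.Injective M) (v : V) (ψ : V →ₗ[k] k)
    (ha : ∀ n, IsIntegral ℤ (ψ ((M ^ n) v))) : ∃ T, 0 < T ∧ ∀ n, ψ ((M ^ (n + T)) v) = ψ ((M ^ n) v) := by
  refine seq_periodic p hp (fun n => ψ ((M ^ n) v)) ha M.charpoly.natDegree M.charpoly.coeff ?_ ?_ ?_
  · intro h0
    have hd : LinearMap.det M = 0 := by rw [LinearMap.det_eq_sign_charpoly_coeff, h0, mul_zero]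
    have := LinearMap.bot_lt_ker_of_det_eq_zero hd
    rw [LinearMap.ker_eq_bot.2 hM] at this
    exact lt_irrefl _ this
  · exact M.charpoly_monic
  · intro n
    have h := LinearMap.aeval_self_charpoly M
    rw [Polynomial.aeval_eq_sum_range] at h
    have h2 := congrArg (fun f => ψ (f ((M ^ n) v))) h
    simp only [LinearMap.sum_apply, LinearMap.smul_apply, map_sum, map_smul, LinearMap.zero_apply, map_zero, smul_eq_mul] at h2
    rw [← h2]
    refine Finset.sum_congr rfl fun i _ => ?_
    rw [add_comm n i, pow_add, Module.End.mul_apply]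

end seqs

section fin
variable (k H : Type*) [Field k] [Ring H] [HopfAlgebra k H] [FiniteDimensional k H]

/-- convolution on the right with the identity -/
noncomputable def MM : Module.End k (H →ₗ[k] H) where
  toFun f := (toConv f * toConv LinearMap.id).ofConv
  map_add' f g := by ext x; simp only [conv_apply, LinearMap.add_apply, add_mul, Finset.sum_add_distrib]
  map_smul' r f := by ext x; simp only [conv_apply, LinearMap.smul_apply, smul_mul_assoc, Finset.smul_sum, RingHom.id_apply]

lemma MM_inj : Function.Injective (MM k H) := by
  intro f g h
  have h1 : toConv f * toConv (LinearMap.id : H →ₗ[k] H) = toConv g * toConv LinearMap.id := WithConv.ext h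
  have h2 := congrArg (fun t => t * toConv (SS k H)) h1
  simp only [mul_assoc, I_mul_S, mul_one] at h2
  exact congrArg WithConv.ofConv h2

lemma MM_pow (n : ℕ) : (MM k H ^ n) (sweedlerPower k H 0) = sweedlerPower k H n := by
  induction n with
  | zero => simp
  | succ n ih => rw [pow_succ', Module.End.mul_apply, ih]; rfl

lemma periodic_main (p : ℕ) (hp : 0 < p) [CharP k p] : ∃ T : ℕ, 0 < T ∧ ∀ n : ℕ,
      LinearMap.trace k H (SS k H ∘ₗ sweedlerPower k H (n + T)) =
        LinearMap.trace k H (SS k H ∘ₗ sweedlerPower k H n) := by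
  have := end_periodic p hp (MM k H) (MM_inj k H) (sweedlerPower k H 0)
    (LinearMap.trace k H ∘ₗ LinearMap.llcomp k H H H (SS k H)) (by
      intro n
      rw [MM_pow]
      exact ind_integral k H n)
  simp only [MM_pow] at this
  exact this
end fin
end IndPer

/-- For a finite-dimensional Hopf algebra `H` over a field `k` of positive
characteristic `p`, the indicator sequence `ν_n(H) = Tr(S ∘ P^(n-1))` is periodic: there is
`T > 0` with `Tr(S ∘ P^(n+T)) = Tr(S ∘ P^(n))` for all `n`. -/
theorem indicators_periodic_positive_char
    (k H : Type*) [Field k] [Ring H] [HopfAlgebra k H] [FiniteDimensional k H]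
    (p : ℕ) (hp : 0 < p) [CharP k p] :
    ∃ T : ℕ, 0 < T ∧ ∀ n : ℕ,
      LinearMap.trace k H (HopfAlgebra.antipode (R := k) ∘ₗ sweedlerPower k H (n + T)) =
        LinearMap.trace k H (HopfAlgebra.antipode (R := k) ∘ₗ sweedlerPower k H n) := by
  exact IndPer.periodic_main k H p hp
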